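/- For every integer k ≥ 1, every αᵏ-derivation of the q-deformed W(2,2) algebra is zero: if D: W_q → W_q is a linear map satisfying D ∘ α = α ∘ D and D([x,y]_q) = [αᵏ(x), D(y)]_q − [αᵏ(y), D(x)]_q for all x, y ∈ W_q, then D = 0. -/

import Mathlib

noncomputable section

/-- The underlying space of the q-deformed W(2,2) algebra: formal ℂ-linear
combinations of the basis `{L_n, M_n : n ∈ ℤ}`. -/
abbrev Wq : Type := (ℤ →₀ ℂ) × (ℤ →₀ ℂ)

/-- The basis vector `L_n`. -/
def Lb (n : ℤ) : Wq := (Finsupp.single n 1, 0)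

/-- The basis vector `M_n`. -/
def Mb (n : ℤ) : Wq := (0, Finsupp.single n 1)

/-- The q-number `[n]_q = (q^n - q^(-n))/(q - q⁻¹)`. -/
def qnum (q : ℂ) (n : ℤ) : ℂ := (q ^ n - q ^ (-n)) / (q - q⁻¹)

/-- `⟨n⟩_q = q^n + q^(-n)`. -/
def qang (q : ℂ) (n : ℤ) : ℂ := q ^ n + q ^ (-n)

theorem qzpow_ne (q : ℂ) (hq0 : q ≠ 0) (hq1 : ∀ k : ℤ, 1 ≤ k → q ^ k ≠ 1) (n : ℤ) (hn : n ≠ 0) :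
    q ^ n ≠ 1 := by
  intro h
  rcases lt_or_gt_of_ne hn with h1 | h1
  · exact hq1 (-n) (by omega) (by rw [zpow_neg, h, inv_one])
  · exact hq1 n (by omega) h

theorem qnum_neg (q : ℂ) (n : ℤ) : qnum q (-n) = -qnum q n := by
  unfold qnum
  rw [neg_neg]; ring

theorem qang_neg (q : ℂ) (n : ℤ) : qang q (-n) = qang q n := by
  unfold qang
  rw [neg_neg]; ring

theorem qnum_zero (q : ℂ) : qnum q 0 = 0 := by
  simp [qnum]

theorem qang_zero (q : ℂ) : qang q 0 = 2 := by
  simp [qang]; norm_num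

theorem sub_zpow_ne (q : ℂ) (hq0 : q ≠ 0) (hq1 : ∀ k : ℤ, 1 ≤ k → q ^ k ≠ 1) (n : ℤ)
    (hn : n ≠ 0) : q ^ n - q ^ (-n) ≠ 0 := by
  intro h
  have h1 : q ^ n = q ^ (-n) := sub_eq_zero.mp h
  apply qzpow_ne q hq0 hq1 (n + n) (by omega)
  rw [zpow_add₀ hq0]
  nth_rewrite 1 [h1]
  rw [← zpow_add₀ hq0]; simp

theorem qnum_ne (q : ℂ) (hq0 : q ≠ 0) (hq1 : ∀ k : ℤ, 1 ≤ k → q ^ k ≠ 1) (n : ℤ)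
    (hn : n ≠ 0) : qnum q n ≠ 0 := by
  have h := sub_zpow_ne q hq0 hq1 1 one_ne_zero
  rw [zpow_neg, zpow_one] at h
  exact div_ne_zero (sub_zpow_ne q hq0 hq1 n hn) h

theorem qang_inj (q : ℂ) (hq0 : q ≠ 0) (hq1 : ∀ k : ℤ, 1 ≤ k → q ^ k ≠ 1) (n j : ℤ)
    (h : qang q n = qang q j) : j = n ∨ j = -n := by
  by_contra! hc
  have h1 := qzpow_ne q hq0 hq1 (n - j) (by omega)
  have h2 := qzpow_ne q hq0 hq1 (n + j) (by omega)
  have hn : q ^ n ≠ 0 := zpow_ne_zero _ hq0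
  have hj : q ^ j ≠ 0 := zpow_ne_zero _ hq0
  rw [zpow_sub₀ hq0] at h1
  rw [zpow_add₀ hq0] at h2
  unfold qang at h
  rw [zpow_neg, zpow_neg] at h
  generalize q ^ n = a at *
  generalize q ^ j = b at *
  have h3 : a - b ≠ 0 := by
    intro h0
    apply h1
    rw [sub_eq_zero.mp h0, div_self hj]
  have h4 : (a - b) * (a * b - 1) = 0 := by
    field_simp at h
    linear_combination h
  rcases mul_eq_zero.mp h4 with h5 | h5
  · exact h3 h5
  · exact h2 (sub_eq_zero.mp h5)

/-- A linear map diagonal in the basis acts diagonally on coordinates. -/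
theorem diag_coord (f : Wq →ₗ[ℂ] Wq) (e : ℤ → ℂ) (hL : ∀ n, f (Lb n) = e n • Lb n)
    (hM : ∀ n, f (Mb n) = e n • Mb n) (x : Wq) (j : ℤ) :
    (f x).1 j = e j * x.1 j ∧ (f x).2 j = e j * x.2 j := by
  obtain ⟨u, v⟩ := x
  have h1 : ∀ u : ℤ →₀ ℂ, (f (u, 0)).1 j = e j * u j ∧ (f (u, 0)).2 j = 0 := by
    intro u
    induction u using Finsupp.induction_linear with
    | zero =>
      have : ((0, 0) : Wq) = 0 := rfl
      rw [this, map_zero]; simp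
    | add a b ha hb =>
      have : ((a + b, 0) : Wq) = (a, 0) + (b, 0) := by simp
      rw [this, map_add]
      simp [ha.1, ha.2, hb.1, hb.2, mul_add]
    | single n c =>
      have : ((Finsupp.single n c, 0) : Wq) = c • Lb n := by simp [Lb]
      rw [this, map_smul, hL]
      by_cases h : n = j
      · subst h; simp [Lb, mul_comm]
      · simp [Lb, h]
  have h2 : ∀ u : ℤ →₀ ℂ, (f (0, u)).1 j = 0 ∧ (f (0, u)).2 j = e j * u j := by
    intro u
    induction u using Finsupp.induction_linear with
    | zero =>
      have : ((0, 0) : Wq) = 0 := rfl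
      rw [this, map_zero]; simp
    | add a b ha hb =>
      have : ((0, a + b) : Wq) = (0, a) + (0, b) := by simp
      rw [this, map_add]
      simp [ha.1, ha.2, hb.1, hb.2, mul_add]
    | single n c =>
      have : ((0, Finsupp.single n c) : Wq) = c • Mb n := by simp [Mb]
      rw [this, map_smul, hM]
      by_cases h : n = j
      · subst h; simp [Mb, mul_comm]
      · simp [Mb, h]
  have : ((u, v) : Wq) = (u, 0) + (0, v) := by simp
  rw [this, map_add]
  simp [(h1 u).1, (h1 u).2, (h2 v).1, (h2 v).2]

theorem ext_LM (D : Wq →ₗ[ℂ] Wq) (hL : ∀ n, D (Lb n) = 0) (hM : ∀ n, D (Mb n) = 0) : D = 0 := by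
  apply LinearMap.prod_ext <;> apply Finsupp.lhom_ext' <;> intro n <;> apply LinearMap.ext_ring
  · simpa [Lb] using hL n
  · simpa [Mb] using hM n

theorem scalar_zero (k : ℕ) (hk : 1 ≤ k) (c x y z : ℂ)
    (h1 : (1 - 2 ^ k) * c = 2 * x ^ 2 * c) (h2 : (1 - 2 ^ k) * c = 2 * y ^ 2 * c)
    (h3 : (1 - 2 ^ k) * c = 2 * z ^ 2 * c) (h4 : z * c = 2 * x * y * c) : c = 0 := by
  by_contra hc
  have g1 := mul_right_cancel₀ hc h1
  have g2 := mul_right_cancel₀ hc h2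
  have g3 := mul_right_cancel₀ hc h3
  have g4 := mul_right_cancel₀ hc h4
  have g5 : (1 - (2 : ℂ) ^ k) * (1 - 2 * (1 - 2 ^ k)) = 0 := by
    rw [g4] at g3
    linear_combination g3 - 2 * (1 - 2 ^ k) * g1 - 4 * x ^ 2 * g2
  rcases mul_eq_zero.mp g5 with h | h
  · have : (2 : ℂ) ^ k = 1 := by linear_combination -h
    have h' : (2 : ℕ) ^ k = 1 := by exact_mod_cast this
    have := Nat.one_lt_two_pow (n := k) (by omega)
    omega
  · have : 2 * (2 : ℂ) ^ k = 1 := by linear_combination h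
    have h' : 2 * (2 : ℕ) ^ k = 1 := by exact_mod_cast this
    omega

/-- For every `k ≥ 1`, every `αᵏ`-derivation of the q-deformed W(2,2)
algebra is zero.  Here `α ^ k` is the `k`-fold composition of `α`. -/
theorem alpha_k_derivation_eq_zero (q : ℂ) (hq0 : q ≠ 0)
    (hq1 : ∀ k : ℤ, 1 ≤ k → q ^ k ≠ 1)
    (br : Wq →ₗ[ℂ] Wq →ₗ[ℂ] Wq) (α : Wq →ₗ[ℂ] Wq)
    (hLL : ∀ n m : ℤ, br (Lb n) (Lb m) = qnum q (m - n) • Lb (m + n))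
    (hLM : ∀ n m : ℤ, br (Lb n) (Mb m) = qnum q (m - n) • Mb (m + n))
    (hML : ∀ m n : ℤ, br (Mb m) (Lb n) = qnum q (n - m) • Mb (m + n))
    (hMM : ∀ n m : ℤ, br (Mb n) (Mb m) = 0)
    (hαL : ∀ n : ℤ, α (Lb n) = qang q n • Lb n)
    (hαM : ∀ n : ℤ, α (Mb n) = qang q n • Mb n)
    (k : ℕ) (hk : 1 ≤ k)
    (D : Wq →ₗ[ℂ] Wq)
    (hDα : ∀ x : Wq, D (α x) = α (D x))
    (hDder : ∀ x y : Wq,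
      D (br x y) = br ((α ^ k) x) (D y) - br ((α ^ k) y) (D x)) :
    D = 0 := by
  have h2k : (1 - (2 : ℂ) ^ k) ≠ 0 := by
    intro h
    have : (2 : ℂ) ^ k = 1 := by linear_combination -h
    have h' : (2 : ℕ) ^ k = 1 := by exact_mod_cast this
    have := Nat.one_lt_two_pow (n := k) (by omega)
    omega
  have h2k' : (1 + (2 : ℂ) ^ k) ≠ 0 := by
    intro h
    have : 1 + (2 : ℕ) ^ k = 0 := by exact_mod_cast h
    simp at this
  have hαkL : ∀ n, (α ^ k) (Lb n) = qang q n ^ k • Lb n := by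
    intro n
    clear hDder hk h2k h2k'
    induction k with
    | zero => simp
    | succ k ih => rw [pow_succ', Module.End.mul_apply, ih, map_smul, hαL, smul_smul, pow_succ]
  have hαkM : ∀ n, (α ^ k) (Mb n) = qang q n ^ k • Mb n := by
    intro n
    clear hDder hk h2k h2k' hαkL
    induction k with
    | zero => simp
    | succ k ih => rw [pow_succ', Module.End.mul_apply, ih, map_smul, hαM, smul_smul, pow_succ]
  have hαc := diag_coord α (qang q) hαL hαM
  have hL0 := diag_coord (br (Lb 0)) (qnum q) (by simpa using hLL 0) (by simpa using hLM 0)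
  have hnn := qnum_ne q hq0 hq1
  -- weight argument
  have hwt : ∀ (x : Wq) (n j : ℤ), α x = qang q n • x → j ≠ n → j ≠ -n →
      (D x).1 j = 0 ∧ (D x).2 j = 0 := by
    intro x n j hx h1 h2
    have h := hDα x
    rw [hx, map_smul] at h
    have hne : qang q n - qang q j ≠ 0 := by
      intro h0
      rcases qang_inj q hq0 hq1 n j (sub_eq_zero.mp h0) with h3 | h3
      · exact h1 h3
      · exact h2 h3
    have e := hαc (D x) j
    rw [← h] at e
    obtain ⟨e1, e2⟩ := e
    simp only [Prod.smul_fst, Prod.smul_snd, Finsupp.smul_apply, smul_eq_mul] at e1 e2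
    constructor
    · apply mul_left_cancel₀ hne
      linear_combination e1
    · apply mul_left_cancel₀ hne
      linear_combination e2
  obtain ⟨c, d, hD0⟩ : ∃ c d : ℂ, D (Lb 0) = (1 - (2 : ℂ) ^ k) • (c • Lb 0 + d • Mb 0) := by
    refine ⟨(D (Lb 0)).1 0 / (1 - 2 ^ k), (D (Lb 0)).2 0 / (1 - 2 ^ k), ?_⟩
    ext j
    · by_cases hj : j = 0
      · subst hj; simp [Lb, Mb]; field_simp
      · rw [(hwt (Lb 0) 0 j (hαL 0) hj (by simpa using hj)).1]
        simp [Lb, Mb, Ne.symm hj]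
    · by_cases hj : j = 0
      · subst hj; simp [Lb, Mb]; field_simp
      · rw [(hwt (Lb 0) 0 j (hαL 0) hj (by simpa using hj)).2]
        simp [Lb, Mb, Ne.symm hj]
  obtain ⟨U, hU⟩ : ∃ U : ℤ → Wq, ∀ m, U m = c • Lb m + d • Mb m := ⟨_, fun _ => rfl⟩
  have hLU : ∀ n m, br (Lb n) (U m) = qnum q (m - n) • U (m + n) := by
    intro n m
    rw [hU, hU, map_add, map_smul, map_smul, hLL, hLM, smul_add, smul_comm c, smul_comm d]
  rw [← hU] at hD0
  have hU1 : ∀ m, (U m).1 m = c := by intro m; simp [hU, Lb, Mb]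
  have hU2 : ∀ m, (U m).2 m = d := by intro m; simp [hU, Lb, Mb]
  have hU0 : ∀ m j, j ≠ m → (U m).1 j = 0 ∧ (U m).2 j = 0 := by
    intro m j h; simp [hU, Lb, Mb, Ne.symm h]
  -- a vector with coordinates supported on `±m` satisfying the `L_0` equation
  have key : ∀ (m : ℤ) (x : Wq) (s : ℂ), m ≠ 0 →
      (∀ j, j ≠ m → j ≠ -m → x.1 j = 0 ∧ x.2 j = 0) →
      qnum q m • x = (2 : ℂ) ^ k • br (Lb 0) x + (qnum q m * (s * (1 - 2 ^ k))) • U m →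
      x = s • U m := by
    intro m x s hm hx h
    have hqm := hnn m hm
    have e1 : ∀ j, qnum q m * x.1 j =
        2 ^ k * (qnum q j * x.1 j) + qnum q m * (s * (1 - 2 ^ k)) * (U m).1 j := by
      intro j
      rw [← (hL0 x j).1]
      simpa using congrArg (fun y : Wq => y.1 j) h
    have e2 : ∀ j, qnum q m * x.2 j =
        2 ^ k * (qnum q j * x.2 j) + qnum q m * (s * (1 - 2 ^ k)) * (U m).2 j := by
      intro j
      rw [← (hL0 x j).2]
      simpa using congrArg (fun y : Wq => y.2 j) h
    have main : ∀ j, x.1 j = s * (U m).1 j ∧ x.2 j = s * (U m).2 j := by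
      intro j
      by_cases h1 : j = m
      · subst h1
        constructor
        · apply mul_left_cancel₀ (mul_ne_zero hqm h2k)
          linear_combination e1 j
        · apply mul_left_cancel₀ (mul_ne_zero hqm h2k)
          linear_combination e2 j
      · rw [(hU0 m j h1).1, (hU0 m j h1).2]
        by_cases h2 : j = -m
        · have f1 := e1 j
          have f2 := e2 j
          rw [(hU0 m j h1).1, h2, qnum_neg] at f1
          rw [(hU0 m j h1).2, h2, qnum_neg] at f2
          rw [h2]
          constructor
          · apply mul_left_cancel₀ (mul_ne_zero hqm h2k')
            linear_combination f1
          · apply mul_left_cancel₀ (mul_ne_zero hqm h2k')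
            linear_combination f2
        · simpa using hx j h1 h2
    ext j
    · simpa using (main j).1
    · simpa using (main j).2
  have hDL : ∀ m, m ≠ 0 → D (Lb m) = qang q m ^ k • U m := by
    intro m hm
    apply key m _ _ hm (fun j h1 h2 => hwt _ m j (hαL m) h1 h2)
    have h := hDder (Lb 0) (Lb m)
    rw [hLL, hαkL, hαkL, hD0] at h
    simp only [map_smul, LinearMap.smul_apply, hLU, qang_zero, sub_zero, add_zero, zero_add, zero_sub, qnum_neg] at h
    rw [h]
    module
  have hLLgen : ∀ n m, n ≠ 0 → m ≠ 0 → n ≠ m →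
      D (Lb (m + n)) = (2 * qang q n ^ k * qang q m ^ k) • U (m + n) := by
    intro n m hn hm hnm
    have h := hDder (Lb n) (Lb m)
    rw [hLL, hαkL, hαkL, hDL n hn, hDL m hm] at h
    simp only [map_smul, LinearMap.smul_apply, hLU] at h
    rw [← neg_sub m n, qnum_neg, add_comm n m] at h
    have hq := hnn (m - n) (by omega)
    apply smul_right_injective _ hq
    simp only
    rw [h]
    module
  have r0 : ∀ m, m ≠ 0 → (1 - (2 : ℂ) ^ k) • U 0 = (2 * (qang q m ^ k) ^ 2) • U 0 := by
    intro m hm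
    have h := hLLgen (-m) m (by omega) hm (by omega)
    rw [add_neg_cancel, hD0, qang_neg] at h
    rw [h]; congr 1; ring
  have r3 : qang q 3 ^ k • U 3 = (2 * qang q 1 ^ k * qang q 2 ^ k) • U 3 := by
    have h := hLLgen 1 2 (by omega) (by omega) (by omega)
    norm_num at h
    rw [← h, hDL 3 (by omega)]
  have hc : c = 0 := by
    have f := fun m hm => congrArg (fun y : Wq => y.1 0) (r0 m hm)
    have g := congrArg (fun y : Wq => y.1 3) r3
    simp only [Prod.smul_fst, Finsupp.smul_apply, smul_eq_mul, hU1] at f g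
    exact scalar_zero k hk c _ _ _ (f 1 (by omega)) (f 2 (by omega)) (f 3 (by omega)) g
  have hd : d = 0 := by
    have f := fun m hm => congrArg (fun y : Wq => y.2 0) (r0 m hm)
    have g := congrArg (fun y : Wq => y.2 3) r3
    simp only [Prod.smul_snd, Finsupp.smul_apply, smul_eq_mul, hU2] at f g
    exact scalar_zero k hk d _ _ _ (f 1 (by omega)) (f 2 (by omega)) (f 3 (by omega)) g
  have hUz : ∀ m, U m = 0 := by intro m; rw [hU, hc, hd]; simp
  have hLz : ∀ m, D (Lb m) = 0 := by
    intro m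
    by_cases hm : m = 0
    · rw [hm, hD0, hUz, smul_zero]
    · rw [hDL m hm, hUz, smul_zero]
  have hMz : ∀ m, m ≠ 0 → D (Mb m) = 0 := by
    intro m hm
    have h := hDder (Lb 0) (Mb m)
    rw [hLM, hαkL, hLz, map_zero, sub_zero, map_smul, map_smul, LinearMap.smul_apply, sub_zero,
      add_zero, qang_zero] at h
    have := key m (D (Mb m)) 0 hm (fun j h1 h2 => hwt _ m j (hαM m) h1 h2) (by rw [h, hUz]; simp)
    simpa using this
  apply ext_LM D hLz
  intro m
  by_cases hm : m = 0
  · subst hm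
    have h := hDder (Lb 1) (Mb (-1))
    rw [hLM, hLz, hMz (-1) (by omega), map_zero, map_zero, sub_zero, map_smul] at h
    exact (smul_eq_zero.mp h).resolve_left (hnn _ (by omega))
  · exact hMz m hm
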